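/- arXiv:0803.4254 — 10 statements merged into one kernel-verified Lean document; each statement's English description precedes it below -/
import Mathlib

section
/- Let Z and Y be real Banach spaces with dim Y = 1, let L : Z → Y be a continuous linear surjection, and let C ⊆ Z be a closed convex subset. Then there exists a continuous map s : L(C) → C (with the subspace topologies) such that L(s(y)) = y for every y ∈ L(C). -/
theorem rank_one_half {Z : Type*} [NormedAddCommGroup Z] [NormedSpace ℝ Z]
    (f : Z →L[ℝ] ℝ) (C : Set Z) (hC : Convex ℝ C) (z : Z) (hz : z ∈ C) :
    ∃ g : ℝ → Z, Continuous g ∧ g (f z) = z ∧ ∃ ε > 0, ∀ x ∈ f '' C, f z ≤ x → x < f z + ε →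
      g x ∈ C ∧ f (g x) = x := by
  by_cases h : ∃ w ∈ C, f z < f w
  · obtain ⟨w, hw, hlt⟩ := h
    have hpos : 0 < f w - f z := sub_pos.2 hlt
    refine ⟨fun x => z + ((x - f z) / (f w - f z)) • (w - z), by fun_prop, by simp,
      f w - f z, hpos, ?_⟩
    intro x _ h1 h2
    constructor
    · apply hC.add_smul_sub_mem hz hw
      exact ⟨div_nonneg (by linarith) hpos.le, (div_le_one hpos).2 (by linarith)⟩
    · simp only [map_add, map_smul, map_sub, smul_eq_mul]
      field_simp
      ring
  · push Not at h
    refine ⟨fun _ => z, continuous_const, rfl, 1, one_pos, ?_⟩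
    rintro x ⟨w, hw, rfl⟩ h1 _
    exact ⟨hz, le_antisymm h1 (h w hw)⟩

theorem rank_one_local {Z : Type*} [NormedAddCommGroup Z] [NormedSpace ℝ Z]
    (f : Z →L[ℝ] ℝ) (C : Set Z) (hC : Convex ℝ C) (z : Z) (hz : z ∈ C) :
    ∃ g : ℝ → Z, Continuous g ∧ ∃ ε > 0, ∀ x ∈ f '' C, |x - f z| < ε →
      g x ∈ C ∧ f (g x) = x := by
  obtain ⟨g, hg, hgz, ε, hε, H⟩ := rank_one_half f C hC z hz
  obtain ⟨g', hg', hgz', ε', hε', H'⟩ := rank_one_half (-f) C hC z hz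
  refine ⟨fun x => if f z ≤ x then g x else g' (-x), ?_, min ε ε', lt_min hε hε', ?_⟩
  · refine Continuous.if_le hg (hg'.comp continuous_neg) continuous_const continuous_id ?_
    intro x hx
    subst hx
    rw [hgz]
    exact hgz'.symm
  · rintro x ⟨w, hw, rfl⟩ hx
    rw [lt_min_iff, abs_lt, abs_lt] at hx
    by_cases h : f z ≤ f w
    · simp only [h, if_true]
      exact H _ ⟨w, hw, rfl⟩ h (by linarith [hx.1.2])
    · simp only [h, if_false]
      obtain ⟨h1, h2⟩ := H' (-(f w)) ⟨w, hw, by simp⟩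
        (by simp only [neg_apply]; linarith)
        (by simp only [neg_apply]; linarith [hx.2.1])
      exact ⟨h1, by simpa using h2⟩

theorem rank_one_real {Z : Type*} [NormedAddCommGroup Z] [NormedSpace ℝ Z]
    (f : Z →L[ℝ] ℝ) (C : Set Z) (hC : Convex ℝ C) :
    ∃ g : C(↥(f '' C), Z), ∀ x : ↥(f '' C), g x ∈ C ∩ f ⁻¹' {(x : ℝ)} := by
  apply exists_continuous_forall_mem_convex_of_local (t := fun x : ↥(f '' C) => C ∩ f ⁻¹' {(x : ℝ)})
  · intro x
    exact hC.inter ((convex_singleton _).linear_preimage f.toLinearMap)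
  · rintro ⟨_, z, hz, rfl⟩
    obtain ⟨g, hg, ε, hε, H⟩ := rank_one_local f C hC z hz
    refine ⟨Metric.ball _ ε, Metric.ball_mem_nhds _ hε, fun x => g x,
      (hg.comp continuous_subtype_val).continuousOn, ?_⟩
    intro x hx
    exact H x x.2 hx


/-- Theorem 2.1, (c) ⇒ (a): every continuous linear surjection `L` from a Banach space `Z`
onto a one-dimensional Banach space `Y` is hereditarily invertible with respect to the family
of all closed convex subsets of `Z`: for each closed convex `C ⊆ Z` the restriction
`L|_C : C → L(C)` admits a continuous right inverse. -/
theorem closed_convex_hereditary_invertible_of_rank_one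
    {Z Y : Type*} [NormedAddCommGroup Z] [NormedSpace ℝ Z] [CompleteSpace Z]
    [NormedAddCommGroup Y] [NormedSpace ℝ Y] [CompleteSpace Y]
    (hY : Module.rank ℝ Y = 1)
    (L : Z →L[ℝ] Y) (hL : Function.Surjective L)
    (C : Set Z) (hC : Convex ℝ C) (hCcl : IsClosed C) :
    ∃ s : ↥(⇑L '' C) → ↥C, Continuous s ∧ ∀ y : ↥(⇑L '' C), L (s y : Z) = (y : Y) := by
  have hfin : Module.finrank ℝ Y = 1 := Module.rank_eq_one_iff_finrank_eq_one.1 hY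
  have : FiniteDimensional ℝ Y := Module.finite_of_finrank_eq_succ hfin
  let e : Y ≃L[ℝ] ℝ := ContinuousLinearEquiv.ofFinrankEq (by simp [hfin])
  obtain ⟨g, hg⟩ := rank_one_real ((e : Y →L[ℝ] ℝ).comp L) C hC
  have key : ∀ y : ↥(⇑L '' C), e y ∈ ((e : Y →L[ℝ] ℝ).comp L) '' C := by
    rintro ⟨_, z, hz, rfl⟩
    exact ⟨z, hz, rfl⟩
  refine ⟨fun y => ⟨g ⟨e y, key y⟩, (hg _).1⟩, ?_, ?_⟩
  · refine Continuous.subtype_mk (g.continuous.comp ?_) _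
    exact Continuous.subtype_mk (e.continuous.comp continuous_subtype_val) _
  · intro y
    have h2 := (hg ⟨e y, key y⟩).2
    exact e.injective h2
end

section
/- Let Y be a real Banach space with dim Y ≥ 2. Then there exist a continuous linear surjection L : ℝ × Y → Y and a compact convex subset C ⊆ ℝ × Y such that no continuous map s : L(C) → C satisfies L(s(y)) = y for every y ∈ L(C). -/
lemma aux_gm (p q t1 t2 y1 y2 : ℝ) (hp : 0 ≤ p) (hq : 0 ≤ q) (ht1 : 0 ≤ t1) (ht2 : 0 ≤ t2)
    (hy1 : 0 ≤ y1) (hy2 : 0 ≤ y2) :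
    p * √(t1 * y1) + q * √(t2 * y2) ≤ √((p * t1 + q * t2) * (p * y1 + q * y2)) := by
  apply Real.le_sqrt_of_sq_le
  rw [Real.sqrt_mul ht1, Real.sqrt_mul ht2]
  obtain ⟨a1, h1⟩ : ∃ a, a = √t1 := ⟨_, rfl⟩
  obtain ⟨a2, h2⟩ : ∃ a, a = √t2 := ⟨_, rfl⟩
  obtain ⟨b1, h3⟩ : ∃ a, a = √y1 := ⟨_, rfl⟩
  obtain ⟨b2, h4⟩ : ∃ a, a = √y2 := ⟨_, rfl⟩
  have e1 : t1 = a1 ^ 2 := by rw [h1, Real.sq_sqrt ht1]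
  have e2 : t2 = a2 ^ 2 := by rw [h2, Real.sq_sqrt ht2]
  have e3 : y1 = b1 ^ 2 := by rw [h3, Real.sq_sqrt hy1]
  have e4 : y2 = b2 ^ 2 := by rw [h4, Real.sq_sqrt hy2]
  rw [← h1, ← h2, ← h3, ← h4, e1, e2, e3, e4]
  nlinarith [mul_nonneg (mul_nonneg hp hq) (sq_nonneg (a1 * b2 - a2 * b1))]

/-- The compact convex model set in three-space. -/
def auxC : Set (ℝ × ℝ × ℝ) :=
  {z | 0 ≤ z.1 ∧ z.1 ≤ 1 ∧ 0 ≤ z.2.2 ∧ z.2.2 ≤ 1 ∧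
    z.2.1 ≤ √(z.1 * z.2.2) ∧ -z.2.1 ≤ √((1 - z.1) * z.2.2)}

lemma auxC_convex : Convex ℝ auxC := by
  rintro ⟨t1, x1, y1⟩ ⟨a1, b1, c1, d1, e1, f1⟩ ⟨t2, x2, y2⟩ ⟨a2, b2, c2, d2, e2, f2⟩ p q hp hq hpq
  simp only at a1 b1 c1 d1 e1 f1 a2 b2 c2 d2 e2 f2
  have g1 := aux_gm p q t1 t2 y1 y2 hp hq a1 a2 c1 c2
  have g2 := aux_gm p q (1 - t1) (1 - t2) y1 y2 hp hq (by linarith) (by linarith) c1 c2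
  have hq' : q = 1 - p := by linarith
  refine ⟨?_, ?_, ?_, ?_, ?_, ?_⟩ <;> simp only [Prod.fst_add, Prod.snd_add, Prod.smul_fst,
    Prod.smul_snd, smul_eq_mul]
  · positivity
  · nlinarith
  · positivity
  · nlinarith
  · nlinarith
  · have : 1 - (p * t1 + q * t2) = p * (1 - t1) + q * (1 - t2) := by rw [hq']; ring
    rw [this]
    nlinarith

lemma auxC_compact : IsCompact auxC := by
  have hK : IsCompact (Set.Icc (0:ℝ) 1 ×ˢ Set.Icc (-1:ℝ) 1 ×ˢ Set.Icc (0:ℝ) 1) :=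
    isCompact_Icc.prod (isCompact_Icc.prod isCompact_Icc)
  refine hK.of_isClosed_subset ?_ ?_
  · simp only [auxC, Set.ofPred_and]
    refine IsClosed.inter (isClosed_le (by fun_prop) (by fun_prop)) <|
      IsClosed.inter (isClosed_le (by fun_prop) (by fun_prop)) <|
      IsClosed.inter (isClosed_le (by fun_prop) (by fun_prop)) <|
      IsClosed.inter (isClosed_le (by fun_prop) (by fun_prop)) <|
      IsClosed.inter (isClosed_le (by fun_prop) (by fun_prop)) <|
      isClosed_le (by fun_prop) (by fun_prop)
  · rintro ⟨t, x, y⟩ ⟨a, b, c, d, e, f⟩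
    simp only at a b c d e f
    have h1 : √(t * y) ≤ 1 := Real.sqrt_le_one.mpr (by nlinarith)
    have h2 : √((1 - t) * y) ≤ 1 := Real.sqrt_le_one.mpr (by nlinarith)
    exact ⟨⟨a, b⟩, ⟨by simp only; linarith, by simp only; linarith⟩, ⟨c, d⟩⟩

lemma auxC_pos {t x : ℝ} (hx : 0 < x) (h : (t, x, x ^ 2) ∈ auxC) : t = 1 := by
  obtain ⟨a, b, c, d, e, f⟩ := h
  simp only at a b c d e f
  rw [Real.le_sqrt' hx] at e
  have : 0 < x ^ 2 := by positivity
  nlinarith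

lemma auxC_neg {t x : ℝ} (hx : x < 0) (h : (t, x, x ^ 2) ∈ auxC) : t = 0 := by
  obtain ⟨a, b, c, d, e, f⟩ := h
  simp only at a b c d e f
  rw [Real.le_sqrt' (by linarith)] at f
  have : 0 < x ^ 2 := by nlinarith
  nlinarith

lemma auxC_exists {x : ℝ} (h1 : -1 ≤ x) (h2 : x ≤ 1) : ∃ t, (t, x, x ^ 2) ∈ auxC := by
  rcases le_total 0 x with h | h
  · refine ⟨1, ?_, ?_, ?_, ?_, ?_, ?_⟩ <;> simp only
    · norm_num
    · norm_num
    · positivity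
    · nlinarith
    · rw [one_mul, Real.sqrt_sq h]
    · exact le_trans (by linarith) (Real.sqrt_nonneg _)
  · refine ⟨0, ?_, ?_, ?_, ?_, ?_, ?_⟩ <;> simp only
    · norm_num
    · norm_num
    · positivity
    · nlinarith
    · exact le_trans (by linarith) (Real.sqrt_nonneg _)
    · rw [sub_zero, one_mul, Real.sqrt_sq_eq_abs]; exact neg_le_abs x

/-- Theorem 2.1, ¬(c) ⇒ ¬(b): if `Y` is a Banach space with `dim Y ≥ 2`, then there exist a
continuous linear surjection `L : ℝ × Y → Y` and a compact convex subset `C ⊆ ℝ × Y` such that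
the restriction `L|_C : C → L(C)` admits no continuous right inverse. -/
theorem exists_no_continuous_right_inverse_of_two_le_rank
    {Y : Type*} [NormedAddCommGroup Y] [NormedSpace ℝ Y] [CompleteSpace Y]
    (hY : 2 ≤ Module.rank ℝ Y) :
    ∃ (L : ℝ × Y →L[ℝ] Y) (C : Set (ℝ × Y)), Function.Surjective L ∧
      IsCompact C ∧ Convex ℝ C ∧
      ¬ ∃ s : ↥(⇑L '' C) → ↥C, Continuous s ∧ ∀ y : ↥(⇑L '' C), L (s y : ℝ × Y) = (y : Y) := by
  obtain ⟨v, hv⟩ := (Module.le_rank_iff (R := ℝ) (M := Y) (n := 2)).1 (by exact_mod_cast hY)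
  have hinj : ∀ x y x' y' : ℝ, x • v 0 + y • v 1 = x' • v 0 + y' • v 1 → x = x' ∧ y = y' := by
    intro x y x' y' h
    have := (LinearIndependent.pair_iff (R := ℝ) (x := v 0) (y := v 1)).1
      (by
        have hvv : ![v 0, v 1] = v := by ext i; fin_cases i <;> rfl
        rw [hvv]; exact hv) (x - x') (y - y') (by
        rw [sub_smul, sub_smul]
        rw [← sub_eq_zero] at h
        rw [← h]; abel)
    exact ⟨by linarith [this.1], by linarith [this.2]⟩
  let ι : ℝ × ℝ × ℝ →L[ℝ] ℝ × Y :=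
    (ContinuousLinearMap.fst ℝ ℝ (ℝ × ℝ)).prod
      (((ContinuousLinearMap.fst ℝ ℝ ℝ).comp (ContinuousLinearMap.snd ℝ ℝ (ℝ × ℝ))).smulRight (v 0)
      + ((ContinuousLinearMap.snd ℝ ℝ ℝ).comp (ContinuousLinearMap.snd ℝ ℝ (ℝ × ℝ))).smulRight (v 1))
  have hι : ∀ t x y, ι (t, x, y) = (t, x • v 0 + y • v 1) := fun _ _ _ => rfl
  refine ⟨ContinuousLinearMap.snd ℝ ℝ Y, ι '' auxC, fun y => ⟨(0, y), rfl⟩,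
    auxC_compact.image ι.continuous, auxC_convex.linear_image ι.toLinearMap, ?_⟩
  rintro ⟨s, hs, hsL⟩
  have hmem : ∀ x : Set.Icc (-1:ℝ) 1, (x:ℝ) • v 0 + (x:ℝ) ^ 2 • v 1 ∈
      (ContinuousLinearMap.snd ℝ ℝ Y) '' (ι '' auxC) := by
    intro x
    obtain ⟨t, ht⟩ := auxC_exists x.2.1 x.2.2
    exact ⟨_, ⟨_, ht, rfl⟩, rfl⟩
  let g : Set.Icc (-1:ℝ) 1 → ℝ := fun x => (s ⟨_, hmem x⟩ : ℝ × Y).1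
  have hg : Continuous g := by
    have : Continuous fun x : Set.Icc (-1:ℝ) 1 => s ⟨_, hmem x⟩ :=
      hs.comp (Continuous.subtype_mk (by fun_prop) _)
    exact continuous_fst.comp (continuous_subtype_val.comp this)
  have hgC : ∀ x, (g x, (x:ℝ), (x:ℝ) ^ 2) ∈ auxC := by
    intro x
    have h1 := hsL ⟨_, hmem x⟩
    obtain ⟨⟨t, a, b⟩, hz, he⟩ := (s ⟨_, hmem x⟩).2
    have hgx : g x = t := by
      change (s ⟨_, hmem x⟩ : ℝ × Y).1 = t
      rw [← he, hι]
    rw [← he, hι] at h1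
    obtain ⟨rfl, rfl⟩ := hinj _ _ _ _ h1
    rw [hgx]; exact hz
  let G : ℝ → ℝ := fun x => g (Set.projIcc (-1:ℝ) 1 (by norm_num) x)
  have hG : Continuous G := hg.comp continuous_projIcc
  have hpos : ∀ x, 0 < x → G x = 1 := fun x hx =>
    auxC_pos (by rw [Set.coe_projIcc]; simp [hx]) (hgC _)
  have hneg : ∀ x, x < 0 → G x = 0 := fun x hx =>
    auxC_neg (by rw [Set.coe_projIcc]; simp [hx]) (hgC _)
  have e1 : G 0 = 1 := by
    refine tendsto_nhds_unique (f := G) (l := nhdsWithin 0 (Set.Ioi 0))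
      (hG.continuousAt.tendsto.mono_left nhdsWithin_le_nhds) ?_
    refine tendsto_const_nhds.congr' ?_
    filter_upwards [self_mem_nhdsWithin] with x hx using (hpos x hx).symm
  have e0 : G 0 = 0 := by
    refine tendsto_nhds_unique (f := G) (l := nhdsWithin 0 (Set.Iio 0))
      (hG.continuousAt.tendsto.mono_left nhdsWithin_le_nhds) ?_
    refine tendsto_const_nhds.congr' ?_
    filter_upwards [self_mem_nhdsWithin] with x hx using (hneg x hx).symm
  linarith
end

section
/- Let K = {(cos t, sin t, t) : t ∈ [0, 2π]} ⊂ ℝ³ be one full rotation of a spiral, let C be the convex hull of K (a compact convex set), and let P : ℝ³ → ℝ² be the orthogonal projection P(x, y, z) = (x, y). Then the restriction P|_C : C → P(C) (with the subspace topologies) is not an open map. -/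
open Real

/-- One full rotation of the spiral `{(cos t, sin t, t) : 0 ≤ t ≤ 2π}` in `ℝ³`. -/
noncomputable def spiralK : Set (ℝ × ℝ × ℝ) :=
  (fun t : ℝ => (Real.cos t, Real.sin t, t)) '' Set.Icc 0 (2 * Real.pi)

/-- The convex hull of one full rotation of the spiral. -/
noncomputable def spiralC : Set (ℝ × ℝ × ℝ) := convexHull ℝ spiralK

/-- The orthogonal projection `P : ℝ³ → ℝ²`, `P (x, y, z) = (x, y)`. -/
noncomputable def projP : (ℝ × ℝ × ℝ) →L[ℝ] ℝ × ℝ :=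
  (ContinuousLinearMap.fst ℝ ℝ (ℝ × ℝ)).prod
    ((ContinuousLinearMap.fst ℝ ℝ ℝ).comp (ContinuousLinearMap.snd ℝ ℝ (ℝ × ℝ)))


/-- Over the circle point of angle `s ∈ (0, 2π)`, the only point of `C` has height `s`. -/
lemma spiralC_height {s : ℝ} (hs0 : 0 < s) (hs1 : s < 2 * Real.pi) {p : ℝ × ℝ × ℝ}
    (hp : p ∈ spiralC) (h1 : p.1 = Real.cos s) (h2 : p.2.1 = Real.sin s) : p.2.2 = s := by
  let T : Set (ℝ × ℝ × ℝ) := {q | q.1 * Real.cos s + q.2.1 * Real.sin s < 1 ∨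
    (q.1 * Real.cos s + q.2.1 * Real.sin s = 1 ∧ q.2.2 = s)}
  have hconv : Convex ℝ T := by
    rintro ⟨x, y, z⟩ hx ⟨x', y', z'⟩ hy a b ha hb hab
    simp only [T, Set.mem_ofPred_eq, Prod.smul_mk, Prod.mk_add_mk, smul_eq_mul] at hx hy ⊢
    have hb' : b = 1 - a := by linarith
    have key : (a * x + b * x') * Real.cos s + (a * y + b * y') * Real.sin s
        = a * (x * Real.cos s + y * Real.sin s) + b * (x' * Real.cos s + y' * Real.sin s) := by
      ring
    rw [key]
    generalize x * Real.cos s + y * Real.sin s = u at *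
    generalize x' * Real.cos s + y' * Real.sin s = v at *
    rcases ha.eq_or_lt with h | ha
    · subst h
      have : b = 1 := by linarith
      subst this
      simpa using hy
    rcases hb.eq_or_lt with h | hb
    · subst h
      have : a = 1 := by linarith
      subst this
      simpa using hx
    rcases hx with hx | ⟨hx, hx'⟩
    · left
      have hv : v ≤ 1 := by rcases hy with h | h <;> linarith [h]
      nlinarith
    · rcases hy with hy | ⟨hy, hy'⟩
      · left
        nlinarith
      · right
        subst hx hy hx' hy'
        constructor
        · linarith
        · rw [← add_mul, hab, one_mul]
  have hK : spiralK ⊆ T := by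
    rintro _ ⟨t, ⟨ht0, ht1⟩, rfl⟩
    simp only [T, Set.mem_ofPred_eq]
    rw [← Real.cos_sub]
    rcases (Real.cos_le_one (t - s)).lt_or_eq with h | h
    · exact Or.inl h
    · right
      refine ⟨h, ?_⟩
      have := (Real.cos_eq_one_iff_of_lt_of_lt (by linarith) (by linarith)).1 h
      linarith
  have hpT : p ∈ T := convexHull_min hK hconv hp
  simp only [T, Set.mem_ofPred_eq, h1, h2] at hpT
  have := Real.cos_sq_add_sin_sq s
  rcases hpT with h | h
  · nlinarith
  · exact h.2

lemma spiral_mem {t : ℝ} (h0 : 0 ≤ t) (h1 : t ≤ 2 * Real.pi) :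
    (Real.cos t, Real.sin t, t) ∈ spiralC :=
  subset_convexHull ℝ _ ⟨t, ⟨h0, h1⟩, rfl⟩

/-- Lemma 2.2, first assertion: the restriction `P|_C : C → P(C)` of the orthogonal projection
`P(x,y,z) = (x,y)` to the convex hull `C` of one full rotation of the spiral is not an open map. -/
theorem spiral_restriction_not_isOpenMap :
    ¬ IsOpenMap (fun x : ↥spiralC =>
      (⟨projP (x : ℝ × ℝ × ℝ), ⟨(x : ℝ × ℝ × ℝ), x.2, rfl⟩⟩ : ↥(⇑projP '' spiralC))) := by
  intro hopen
  have hU : IsOpen {x : ↥spiralC | (x : ℝ × ℝ × ℝ).2.2 < 1} :=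
    isOpen_lt (by fun_prop) continuous_const
  obtain ⟨V, hV, hVeq⟩ := isOpen_induced_iff.1 (hopen _ hU)
  have hpi := Real.pi_gt_three
  have h10 : ((1 : ℝ), (0 : ℝ)) ∈ V := by
    have hm : (Real.cos 0, Real.sin 0, (0 : ℝ)) ∈ spiralC := spiral_mem le_rfl (by positivity)
    have h : (⟨projP (Real.cos 0, Real.sin 0, (0 : ℝ)), ⟨_, hm, rfl⟩⟩ : ↥(⇑projP '' spiralC)) ∈
        Subtype.val ⁻¹' V := by
      rw [hVeq]
      exact ⟨⟨_, hm⟩, by simp, rfl⟩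
    have h' : (Real.cos 0, Real.sin 0) ∈ V := h
    simpa using h'
  have hc : Continuous (fun s : ℝ => (Real.cos s, Real.sin s)) := by fun_prop
  have hW : (fun s : ℝ => (Real.cos s, Real.sin s)) ⁻¹' V ∈ nhds (2 * Real.pi) :=
    (hV.preimage hc).mem_nhds (by simpa using h10)
  have hI : Set.Ioo 1 (2 * Real.pi) ∈ nhdsWithin (2 * Real.pi) (Set.Iio (2 * Real.pi)) :=
    Ioo_mem_nhdsLT (by linarith)
  obtain ⟨s, hsV, hs1, hs2⟩ := Filter.nonempty_of_mem
    (Filter.inter_mem (mem_nhdsWithin_of_mem_nhds hW) hI)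
  have hm := spiral_mem (t := s) (by linarith) hs2.le
  have this : (⟨projP (Real.cos s, Real.sin s, s), ⟨_, hm, rfl⟩⟩ : ↥(⇑projP '' spiralC)) ∈
      Subtype.val ⁻¹' V := hsV
  rw [hVeq] at this
  obtain ⟨⟨p, hp⟩, hp1, hpe⟩ := this
  have hpe' := congrArg Subtype.val hpe
  simp only [projP, ContinuousLinearMap.prod_apply, Prod.mk.injEq] at hpe'
  have := spiralC_height (by linarith) hs2 hp hpe'.1 hpe'.2
  simp only [Set.mem_ofPred_eq] at hp1
  linarith
end

section
/- Let C ⊂ ℝ³ be the convex hull of the set {(cos t, sin t, 0) : t ∈ [0, 2π]} ∪ {(1, 0, 1)}, and let p : ℝ³ → ℝ² be the orthogonal projection p(x, y, z) = (x, y). Then the restriction p|_C : C → p(C) is not an open map, yet the map s : p(C) → C defined by s(x, y) = (x, y, 0) is continuous and satisfies p(s(u)) = u for every u ∈ p(C). -/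
open Real

/-- The convex hull of the unit circle in the plane `z = 0` together with the point `(1,0,1)`. -/
noncomputable def coneC : Set (ℝ × ℝ × ℝ) :=
  convexHull ℝ
    (((fun t : ℝ => (Real.cos t, Real.sin t, (0 : ℝ))) '' Set.Icc 0 (2 * Real.pi)) ∪
      {((1 : ℝ), (0 : ℝ), (1 : ℝ))})

theorem circle_mem (t : ℝ) : (Real.cos t, Real.sin t, (0 : ℝ)) ∈ coneC := by
  have hp : Function.Periodic (fun t : ℝ => (Real.cos t, Real.sin t, (0 : ℝ))) (2 * Real.pi) := by
    intro x
    simp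
  obtain ⟨y, hy, h⟩ := hp.exists_mem_Ico₀ (by positivity) t
  apply subset_convexHull
  left
  exact ⟨y, ⟨hy.1, hy.2.le⟩, h.symm⟩

theorem apex_mem : ((1 : ℝ), (0 : ℝ), (1 : ℝ)) ∈ coneC :=
  subset_convexHull _ _ (Or.inr rfl)

theorem flat_mem (x : ℝ × ℝ × ℝ) (hx : x ∈ coneC) : (x.1, x.2.1, (0 : ℝ)) ∈ coneC := by
  have hsub : coneC ⊆ {x : ℝ × ℝ × ℝ | (x.1, x.2.1, (0 : ℝ)) ∈ coneC} := by
    apply convexHull_min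
    · rintro _ (⟨t, -, rfl⟩ | rfl)
      · exact circle_mem t
      · simpa using circle_mem 0
    · intro a ha b hb u v hu hv huv
      have hc : Convex ℝ coneC := convex_convexHull ℝ _
      have := hc ha hb hu hv huv
      simpa using this
  exact hsub hx

theorem halfspace (t : ℝ) (x : ℝ × ℝ × ℝ) (hx : x ∈ coneC) :
    x.1 * Real.cos t + x.2.1 * Real.sin t + (1 - Real.cos t) * x.2.2 ≤ 1 := by
  have hsub : coneC ⊆ {x : ℝ × ℝ × ℝ |
      x.1 * Real.cos t + x.2.1 * Real.sin t + (1 - Real.cos t) * x.2.2 ≤ 1} := by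
    apply convexHull_min
    · rintro _ (⟨s, -, rfl⟩ | rfl)
      · have := Real.cos_le_one (s - t)
        rw [Real.cos_sub] at this
        simpa using this
      · simp
    · intro a ha b hb u v hu hv huv
      simp only [Set.mem_ofPred_eq, Prod.fst_add, Prod.snd_add, Prod.smul_fst, Prod.smul_snd,
        smul_eq_mul] at *
      have h1 := mul_le_mul_of_nonneg_left ha hu
      have h2 := mul_le_mul_of_nonneg_left hb hv
      linarith
  exact hsub hx

/-- Remark (2) after Theorem 2.1: the restriction `p|_C : C → p(C)` is not an open map, yet the
map `s : p(C) → C`, `s (x, y) = (x, y, 0)`, is a well-defined continuous right inverse of it. -/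
theorem cone_not_open_but_selection :
    (¬ IsOpenMap (fun x : ↥coneC =>
      (⟨projP (x : ℝ × ℝ × ℝ), ⟨(x : ℝ × ℝ × ℝ), x.2, rfl⟩⟩ : ↥(⇑projP '' coneC)))) ∧
    ∃ h : ∀ u : ↥(⇑projP '' coneC), ((u : ℝ × ℝ).1, (u : ℝ × ℝ).2, (0 : ℝ)) ∈ coneC,
      Continuous (fun u : ↥(⇑projP '' coneC) =>
        (⟨((u : ℝ × ℝ).1, (u : ℝ × ℝ).2, (0 : ℝ)), h u⟩ : ↥coneC)) ∧
      ∀ u : ↥(⇑projP '' coneC),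
        projP (((u : ℝ × ℝ).1, (u : ℝ × ℝ).2, (0 : ℝ))) = (u : ℝ × ℝ) := by
  refine ⟨?_, ?_, ?_, ?_⟩
  · intro hopen
    have hU : IsOpen {x : ↥coneC | (1 / 2 : ℝ) < (x : ℝ × ℝ × ℝ).2.2} :=
      isOpen_lt continuous_const (by fun_prop)
    have hV := hopen _ hU
    have hg : Continuous (fun t : ℝ =>
        (⟨(Real.cos t, Real.sin t), ⟨_, circle_mem t, rfl⟩⟩ : ↥(⇑projP '' coneC))) :=
      Continuous.subtype_mk (by fun_prop) _
    have hW := hV.preimage hg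
    obtain ⟨ε, hε, hb⟩ := Metric.isOpen_iff.1 hW 0
      ⟨⟨_, apex_mem⟩, by norm_num, by simp [projP]⟩
    have hpos : 0 < min (ε / 2) 1 := by positivity
    obtain ⟨x, hx, hxe⟩ := @hb (min (ε / 2) 1) (by
      rw [Metric.mem_ball, Real.dist_eq, sub_zero, abs_of_pos hpos]
      exact (min_le_left _ _).trans_lt (by linarith))
    have hle : min (ε / 2) 1 ≤ 1 := min_le_right _ _
    generalize min (ε / 2) 1 = t at *
    have hcos : Real.cos t < 1 := by
      have := Real.cos_lt_cos_of_nonneg_of_le_pi le_rfl (by linarith [Real.pi_gt_three]) hpos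
      simpa using this
    have h1 := halfspace t x x.2
    have he := congrArg Subtype.val hxe
    have e1 : (x : ℝ × ℝ × ℝ).1 = Real.cos t := congrArg Prod.fst he
    have e2 : (x : ℝ × ℝ × ℝ).2.1 = Real.sin t := congrArg Prod.snd he
    rw [e1, e2] at h1
    have hx' : (1 / 2 : ℝ) < (x : ℝ × ℝ × ℝ).2.2 := hx
    nlinarith [Real.sin_sq_add_cos_sq t, mul_pos (sub_pos.2 hcos) (sub_pos.2 hx')]
  · rintro ⟨_, x, hx, rfl⟩
    exact flat_mem x hx
  · exact Continuous.subtype_mk (by fun_prop) _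
  · intro u
    rfl
end

section
/- Let X and Y be real Banach spaces, let L : X → Y be a continuous linear surjection, let C ⊆ X be a convex subset whose affine span is finite-dimensional, and let x ∈ C. If the fiber L⁻¹(L(x)) meets the intrinsic interior (relative interior) of C, then L|_C : C → L(C) is open at x; that is, for every relatively open neighborhood W of x in C, the image L(W ∩ C) is a neighborhood of L(x) in L(C). -/
open Topology

/-- Cases (1) and (2) of the proof of Theorem 2.3: if `C ⊆ X` is convex with finite-dimensional
affine span, `x ∈ C`, and the fiber `L⁻¹(L x)` meets the intrinsic interior of `C`, then
`L|_C : C → L(C)` is open at `x`: for every open `W ∋ x`, the image `L(W ∩ C)` is a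
neighborhood of `L x` in `L(C)`. -/
theorem restriction_open_at_point_of_fiber_meets_intrinsicInterior
    {X Y : Type*} [NormedAddCommGroup X] [NormedSpace ℝ X] [CompleteSpace X]
    [NormedAddCommGroup Y] [NormedSpace ℝ Y] [CompleteSpace Y]
    (L : X →L[ℝ] Y) (hL : Function.Surjective L)
    (C : Set X) (hC : Convex ℝ C)
    (hfd : FiniteDimensional ℝ (affineSpan ℝ C).direction)
    (x : X) (hx : x ∈ C)
    (hfib : (⇑L ⁻¹' {L x} ∩ intrinsicInterior ℝ C).Nonempty) :
    ∀ W : Set X, IsOpen W → x ∈ W → ⇑L '' (W ∩ C) ∈ 𝓝[⇑L '' C] (L x) := by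
  intro W hW hxW
  obtain ⟨z, hzL, hz⟩ := hfib
  have hzL' : L z = L x := hzL
  obtain ⟨z', hz', rfl⟩ := mem_intrinsicInterior.1 hz
  obtain ⟨ε, hε, hball⟩ := Metric.mem_nhds_iff.1 (mem_interior_iff_mem_nhds.1 hz')
  obtain ⟨δ, hδ, hWball⟩ := Metric.isOpen_iff.1 hW x hxW
  let V := (affineSpan ℝ C).direction
  let M : V →ₗ[ℝ] Y := L.toLinearMap.comp V.subtype
  obtain ⟨S, hS⟩ := M.rangeRestrict.exists_rightInverse_of_surjective M.range_rangeRestrict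
  have hMS : ∀ y : M.range, L (S y : X) = y := fun y =>
    congrArg Subtype.val (LinearMap.congr_fun hS y)
  let T : M.range →L[ℝ] V := S.toContinuousLinearMap
  have hT : ∀ y : M.range, ‖(S y : X)‖ ≤ ‖T‖ * ‖(y : Y)‖ := fun y => T.le_opNorm y
  -- the convex parameter
  obtain ⟨t, ht0, ht1, htd⟩ : ∃ t : ℝ, 0 < t ∧ t ≤ 1 ∧ t * ‖(z' : X) - x‖ < δ / 2 := by
    have hn := norm_nonneg ((z' : X) - x)
    refine ⟨min 1 (δ / 2 / (‖(z' : X) - x‖ + 1)), by positivity, min_le_left _ _, ?_⟩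
    calc _ ≤ δ / 2 / (‖(z' : X) - x‖ + 1) * ‖(z' : X) - x‖ := by
            gcongr; exact min_le_right _ _
      _ < δ / 2 := by
            rw [div_mul_eq_mul_div, div_lt_iff₀ (by positivity)]
            nlinarith
  have hr : 0 < min (t * ε) (δ / 2) / (‖T‖ + 1) := by positivity
  rw [Metric.mem_nhdsWithin_iff]
  refine ⟨_, hr, ?_⟩
  rintro _ ⟨hy, c, hc, rfl⟩
  rw [Metric.mem_ball, dist_eq_norm, lt_div_iff₀ (by positivity)] at hy
  have hcx : c - x ∈ V :=
    AffineSubspace.vsub_mem_direction (subset_affineSpan ℝ C hc) (subset_affineSpan ℝ C hx)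
  let y : M.range := ⟨M ⟨c - x, hcx⟩, LinearMap.mem_range_self _ _⟩
  have hyv : (y : Y) = L c - L x := map_sub L c x
  have hv : ‖(S y : X)‖ < min (t * ε) (δ / 2) := by
    have h1 := hT y
    rw [hyv] at h1
    nlinarith [norm_nonneg (L c - L x)]
  have hLv := hMS y
  rw [hyv] at hLv
  have hvV : (S y : X) ∈ V := (S y).2
  generalize (S y : X) = v at hv hLv hvV
  have hp : t⁻¹ • v + (z' : X) ∈ affineSpan ℝ C :=
    AffineSubspace.vadd_mem_of_mem_direction (V.smul_mem _ hvV) z'.2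
  have hpC : t⁻¹ • v + (z' : X) ∈ C := by
    have : (⟨_, hp⟩ : affineSpan ℝ C) ∈ Metric.ball z' ε := by
      rw [Metric.mem_ball, Subtype.dist_eq, dist_eq_norm, add_sub_cancel_right, norm_smul,
        norm_inv, Real.norm_of_nonneg ht0.le, inv_mul_lt_iff₀ ht0]
      exact hv.trans_le (min_le_left _ _)
    exact hball this
  have hw : (1 - t) • x + t • (t⁻¹ • v + (z' : X)) = x + (t • ((z' : X) - x) + v) := by
    rw [smul_add, smul_inv_smul₀ ht0.ne']
    module
  refine ⟨x + (t • ((z' : X) - x) + v), ⟨hWball ?_, ?_⟩, ?_⟩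
  · rw [Metric.mem_ball, dist_eq_norm, add_sub_cancel_left]
    have h2 := norm_add_le (t • ((z' : X) - x)) v
    rw [norm_smul, Real.norm_of_nonneg ht0.le] at h2
    have h3 := hv.trans_le (min_le_right _ _)
    linarith
  · rw [← hw]
    exact hC hx hpC (by linarith) ht0.le (by ring)
  · simp [hzL', hLv]
end

section
/- Let Z be a real Banach space and let (eₙ)ₙ≥₁ be a sequence in Z with ‖eₙ‖ = 1 for all n, admitting biorthogonal continuous linear functionals, i.e., continuous linear functionals φₖ : Z → ℝ with φₖ(eⱼ) = 1 if k = j and 0 otherwise. Let P : Z → Z be a continuous linear projection with P(e₁) = 0 and P(eₙ) = eₙ for all n ≥ 2, and let C be the closed convex hull of the set {eₙ/n : n ≥ 1} ∪ {2e₁ − eₙ/n : n ≥ 1}. Then C is a compact convex set, and for every neighborhood U of 0 in Z there is no continuous map s : P(C) ∩ U → C satisfying P(s(y)) = y for all y ∈ P(C) ∩ U; in particular, the restriction P|_C : C → P(C) is not open at the point e₁. -/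
open Topology

theorem aux_fiber {Z : Type*} [NormedAddCommGroup Z] [NormedSpace ℝ Z]
    (S : Set Z) (f : Z →L[ℝ] ℝ) (p : Z)
    (hS : ∀ z ∈ S, ‖z - p‖ + 4 * f z ≤ 4) :
    ∀ z ∈ closure (convexHull ℝ S), ‖z - p‖ + 4 * f z ≤ 4 := by
  have hcl : IsClosed {z : Z | ‖z - p‖ + 4 * f z ≤ 4} :=
    isClosed_le (by fun_prop) continuous_const
  have hcv : Convex ℝ {z : Z | ‖z - p‖ + 4 * f z ≤ 4} := by
    intro x hx y hy a b ha hb hab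
    simp only [Set.mem_ofPred_eq] at *
    have h1 : a • x + b • y - p = a • (x - p) + b • (y - p) := by
      have : p = (a + b) • p := by rw [hab, one_smul]
      nth_rewrite 1 [this]
      module
    have h2 : ‖a • x + b • y - p‖ ≤ a * ‖x - p‖ + b * ‖y - p‖ := by
      rw [h1]
      refine (norm_add_le _ _).trans ?_
      rw [norm_smul, norm_smul, Real.norm_of_nonneg ha, Real.norm_of_nonneg hb]
    have h3 : f (a • x + b • y) = a * f x + b * f y := by simp
    rw [h3]
    nlinarith [mul_le_mul_of_nonneg_left hx ha, mul_le_mul_of_nonneg_left hy hb]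
  exact fun z hz => closure_minimal (convexHull_min hS hcv) hcl hz

theorem projection_restriction_not_locally_invertible
    {Z : Type*} [NormedAddCommGroup Z] [NormedSpace ℝ Z] [CompleteSpace Z]
    (e : ℕ → Z) (he : ∀ n, 1 ≤ n → ‖e n‖ = 1)
    (φ : ℕ → Z →L[ℝ] ℝ)
    (hbi : ∀ k j, 1 ≤ k → 1 ≤ j → φ k (e j) = if k = j then 1 else 0)
    (P : Z →L[ℝ] Z) (hPP : ∀ z, P (P z) = P z)
    (hP1 : P (e 1) = 0) (hPn : ∀ n, 2 ≤ n → P (e n) = e n)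
    (C : Set Z)
    (hC : C = closure (convexHull ℝ
      ({z : Z | ∃ n : ℕ, 1 ≤ n ∧ z = (n : ℝ)⁻¹ • e n} ∪
        {z : Z | ∃ n : ℕ, 1 ≤ n ∧ z = (2 : ℝ) • e 1 - (n : ℝ)⁻¹ • e n}))) :
    IsCompact C ∧ Convex ℝ C ∧
    (∀ U ∈ 𝓝 (0 : Z),
      ¬ ∃ s : ↥(⇑P '' C ∩ U) → ↥C, Continuous s ∧
        ∀ y : ↥(⇑P '' C ∩ U), P (s y : Z) = (y : Z)) ∧
    ¬ ∀ W : Set Z, IsOpen W → e 1 ∈ W → ⇑P '' (W ∩ C) ∈ 𝓝[⇑P '' C] (P (e 1)) := by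
  set S : Set Z := ({z : Z | ∃ n : ℕ, 1 ≤ n ∧ z = (n : ℝ)⁻¹ • e n} ∪
        {z : Z | ∃ n : ℕ, 1 ≤ n ∧ z = (2 : ℝ) • e 1 - (n : ℝ)⁻¹ • e n}) with hS
  have hSC : S ⊆ C := hC ▸ (subset_convexHull ℝ S).trans subset_closure
  have hmem1 : ∀ n : ℕ, 1 ≤ n → (n : ℝ)⁻¹ • e n ∈ C := fun n hn => hSC (Or.inl ⟨n, hn, rfl⟩)
  have hmem2 : ∀ n : ℕ, 1 ≤ n → (2 : ℝ) • e 1 - (n : ℝ)⁻¹ • e n ∈ C :=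
    fun n hn => hSC (Or.inr ⟨n, hn, rfl⟩)
  have he1C : e 1 ∈ C := by simpa using hmem1 1 le_rfl
  have hnorm : ∀ n : ℕ, 1 ≤ n → ‖(n : ℝ)⁻¹ • e n‖ = (n : ℝ)⁻¹ := by
    intro n hn
    rw [norm_smul, he n hn, mul_one, Real.norm_of_nonneg (by positivity)]
  have hinv : ∀ n : ℕ, 1 ≤ n → (n : ℝ)⁻¹ ≤ 1 := fun n hn =>
    inv_le_one_of_one_le₀ (by exact_mod_cast hn)
  have h2e : ‖(2 : ℝ) • e 1‖ = 2 := by rw [norm_smul, he 1 le_rfl]; norm_num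
  -- φ_n ∘ P = φ_n on C
  have hφP : ∀ n : ℕ, 2 ≤ n → ∀ z ∈ C, φ n (P z) = φ n z := by
    intro n hn z hz
    have hb : ∀ j, 1 ≤ j → φ n (P (e j)) = φ n (e j) := by
      intro j hj
      rcases Nat.lt_or_ge j 2 with h | h
      · obtain rfl : j = 1 := by omega
        rw [hP1, hbi n 1 (by omega) le_rfl, if_neg (by omega), map_zero]
      · rw [hPn j h]
    have hsub : S ⊆ (LinearMap.ker (((φ n).comp P - φ n : Z →L[ℝ] ℝ) : Z →ₗ[ℝ] ℝ) : Set Z) := by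
      rintro w (⟨j, hj, rfl⟩ | ⟨j, hj, rfl⟩) <;>
        simp [hb j hj, hb 1 le_rfl]
    have hcl : IsClosed
        (LinearMap.ker (((φ n).comp P - φ n : Z →L[ℝ] ℝ) : Z →ₗ[ℝ] ℝ) : Set Z) :=
      ((φ n).comp P - φ n : Z →L[ℝ] ℝ).isClosed_ker
    rw [hC] at hz
    have := closure_minimal (convexHull_min hsub (Submodule.convex _)) hcl hz
    simpa [sub_eq_zero] using this
  have hval : ∀ n j : ℕ, 2 ≤ n → 1 ≤ j →
      n * φ n ((j : ℝ)⁻¹ • e j) = if n = j then 1 else 0 := by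
    intro n j hn hj
    rw [map_smul, hbi n j (by omega) hj]
    split_ifs with h
    · subst h
      have : (n : ℝ) ≠ 0 := by positivity
      simp [this]
    · simp
  have hφ1 : ∀ n : ℕ, 2 ≤ n → φ n (e 1) = 0 := fun n hn => by
    rw [hbi n 1 (by omega) le_rfl, if_neg (by omega)]
  have hb1 : ∀ j k : ℕ, 1 ≤ j → 1 ≤ k → ‖(j : ℝ)⁻¹ • e j - (k : ℝ)⁻¹ • e k‖ ≤ 2 := by
    intro j k hj hk
    have := norm_sub_le ((j : ℝ)⁻¹ • e j) ((k : ℝ)⁻¹ • e k)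
    rw [hnorm j hj, hnorm k hk] at this
    linarith [hinv j hj, hinv k hk]
  have hb2 : ∀ j k : ℕ, 1 ≤ j → 1 ≤ k →
      ‖(2 : ℝ) • e 1 - (j : ℝ)⁻¹ • e j - (k : ℝ)⁻¹ • e k‖ ≤ 4 := by
    intro j k hj hk
    have h1 := norm_sub_le ((2 : ℝ) • e 1 - (j : ℝ)⁻¹ • e j) ((k : ℝ)⁻¹ • e k)
    have h2 := norm_sub_le ((2 : ℝ) • e 1) ((j : ℝ)⁻¹ • e j)
    rw [hnorm k hk] at h1
    rw [hnorm j hj, h2e] at h2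
    linarith [hinv j hj, hinv k hk]
  have fib1 : ∀ n : ℕ, 2 ≤ n → ∀ z ∈ C, P z = (n : ℝ)⁻¹ • e n → z = (n : ℝ)⁻¹ • e n := by
    intro n hn z hz hPz
    have hv : n * φ n z = 1 := by
      rw [← hφP n hn z hz, hPz, hval n n hn (by omega), if_pos rfl]
    have key := aux_fiber S ((n : ℝ) • φ n) ((n : ℝ)⁻¹ • e n) (by
      rintro w (⟨j, hj, rfl⟩ | ⟨j, hj, rfl⟩)
      · have h := hval n j hn hj
        have h' := hb1 j n hj (by omega)
        simp only [smul_apply, smul_eq_mul]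
        rw [h]
        split_ifs with hnj
        · subst hnj; simp
        · linarith
      · have h := hval n j hn hj
        have h' := hb2 j n hj (by omega)
        simp only [smul_apply, smul_eq_mul]
        rw [map_sub, map_smul _ (2 : ℝ), hφ1 n hn, smul_zero, zero_sub, mul_neg, h]
        split_ifs <;> linarith) z (hC ▸ hz)
    simp only [smul_apply, smul_eq_mul, hv] at key
    have : ‖z - (n : ℝ)⁻¹ • e n‖ ≤ 0 := by linarith
    exact sub_eq_zero.1 (norm_le_zero_iff.1 this)
  have fib2 : ∀ n : ℕ, 2 ≤ n → ∀ z ∈ C, P z = -((n : ℝ)⁻¹ • e n) →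
      z = (2 : ℝ) • e 1 - (n : ℝ)⁻¹ • e n := by
    intro n hn z hz hPz
    have hv : n * φ n z = -1 := by
      rw [← hφP n hn z hz, hPz, map_neg, mul_neg, hval n n hn (by omega), if_pos rfl]
    have key := aux_fiber S (-((n : ℝ) • φ n)) ((2 : ℝ) • e 1 - (n : ℝ)⁻¹ • e n) (by
      rintro w (⟨j, hj, rfl⟩ | ⟨j, hj, rfl⟩)
      · have h := hval n j hn hj
        have h' := hb2 j n hj (by omega)
        have h3 : ‖(j : ℝ)⁻¹ • e j - ((2 : ℝ) • e 1 - (n : ℝ)⁻¹ • e n)‖ =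
            ‖(2 : ℝ) • e 1 - (j : ℝ)⁻¹ • e j - (n : ℝ)⁻¹ • e n‖ := by
          rw [← norm_neg]; congr 1; abel
        simp only [neg_apply, smul_apply, smul_eq_mul]
        rw [h, h3]
        split_ifs <;> linarith
      · have h := hval n j hn hj
        have h' := hb1 n j (by omega) hj
        simp only [neg_apply, smul_apply, smul_eq_mul]
        rw [map_sub, map_smul _ (2 : ℝ), hφ1 n hn, smul_zero, zero_sub, mul_neg (n : ℝ), h,
          sub_sub_sub_cancel_left]
        split_ifs with hnj
        · subst hnj; simp
        · linarith) z (hC ▸ hz)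
    simp only [neg_apply, smul_apply, smul_eq_mul,
      hv] at key
    have : ‖z - ((2 : ℝ) • e 1 - (n : ℝ)⁻¹ • e n)‖ ≤ 0 := by linarith
    exact sub_eq_zero.1 (norm_le_zero_iff.1 this)
  have hP1' : ∀ n : ℕ, 2 ≤ n → (n : ℝ)⁻¹ • e n ∈ P '' C := fun n hn =>
    ⟨_, hmem1 n (by omega), by rw [map_smul, hPn n hn]⟩
  have hP2' : ∀ n : ℕ, 2 ≤ n → -((n : ℝ)⁻¹ • e n) ∈ P '' C := fun n hn =>
    ⟨_, hmem2 n (by omega), by rw [map_sub, map_smul, map_smul, hPn n hn, hP1]; simp⟩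
  have hsmall : ∀ δ : ℝ, 0 < δ → ∃ n : ℕ, 2 ≤ n ∧ (n : ℝ)⁻¹ < δ := by
    intro δ hδ
    obtain ⟨n, hn⟩ := exists_nat_gt δ⁻¹
    refine ⟨n + 2, by omega, ?_⟩
    refine inv_lt_of_inv_lt₀ hδ ?_
    push_cast; linarith
  have hhalf : ∀ n : ℕ, 2 ≤ n → (n : ℝ)⁻¹ ≤ 1 / 2 := by
    intro n hn
    rw [one_div]
    exact inv_anti₀ (by norm_num) (by exact_mod_cast hn)
  have htend : Filter.Tendsto (fun n : ℕ => (n : ℝ)⁻¹ • e n) Filter.atTop (𝓝 0) := by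
    rw [tendsto_zero_iff_norm_tendsto_zero]
    refine (tendsto_inv_atTop_nhds_zero_nat (𝕜 := ℝ)).congr' ?_
    filter_upwards [Filter.eventually_ge_atTop 1] with n hn using (hnorm n hn).symm
  refine ⟨?_, ?_, ?_, ?_⟩
  · have hK1 := htend.isCompact_insert_range
    have hK2 := (htend.const_sub ((2 : ℝ) • e 1)).isCompact_insert_range
    have htb : TotallyBounded S := by
      refine (hK1.union hK2).totallyBounded.subset ?_
      rintro w (⟨j, hj, rfl⟩ | ⟨j, hj, rfl⟩)
      · exact Or.inl (Or.inr ⟨j, rfl⟩)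
      · exact Or.inr (Or.inr ⟨j, rfl⟩)
    rw [hC]
    exact htb.convexHull.closure.isCompact_of_isClosed isClosed_closure
  · rw [hC]; exact (convex_convexHull ℝ S).closure
  · rintro U hU ⟨s, hs, hsP⟩
    have h0 : (0 : Z) ∈ P '' C ∩ U := ⟨⟨e 1, he1C, hP1⟩, mem_of_mem_nhds hU⟩
    obtain ⟨δ, hδ, hsδ⟩ := Metric.continuousAt_iff.1 (hs.continuousAt (x := ⟨0, h0⟩)) (1/2)
      (by norm_num)
    obtain ⟨r, hr, hrU⟩ := Metric.mem_nhds_iff.1 hU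
    obtain ⟨n, hn, hnr⟩ := hsmall (min δ r) (lt_min hδ hr)
    have hn1 := hnorm n (by omega)
    have m1 : (n : ℝ)⁻¹ • e n ∈ P '' C ∩ U := ⟨hP1' n hn, hrU (by
      rw [mem_ball_zero_iff, hn1]; exact hnr.trans_le (min_le_right _ _))⟩
    have m2 : -((n : ℝ)⁻¹ • e n) ∈ P '' C ∩ U := ⟨hP2' n hn, hrU (by
      rw [mem_ball_zero_iff, norm_neg, hn1]; exact hnr.trans_le (min_le_right _ _))⟩
    have d1 := @hsδ ⟨_, m1⟩ (by
      rw [Subtype.dist_eq, dist_zero_right, hn1]; exact hnr.trans_le (min_le_left _ _))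
    have d2 := @hsδ ⟨_, m2⟩ (by
      rw [Subtype.dist_eq, dist_zero_right, norm_neg, hn1]
      exact hnr.trans_le (min_le_left _ _))
    have d := dist_triangle_right (s ⟨_, m2⟩) (s ⟨_, m1⟩) (s ⟨0, h0⟩)
    rw [Subtype.dist_eq (s ⟨_, m2⟩) (s ⟨_, m1⟩), fib1 n hn _ (s ⟨_, m1⟩).2 (hsP _),
      fib2 n hn _ (s ⟨_, m2⟩).2 (hsP _), dist_eq_norm] at d
    have t := norm_sub_norm_le ((2 : ℝ) • e 1) ((n : ℝ)⁻¹ • e n + (n : ℝ)⁻¹ • e n)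
    have t2 := norm_add_le ((n : ℝ)⁻¹ • e n) ((n : ℝ)⁻¹ • e n)
    rw [h2e, ← sub_sub] at t
    rw [hn1] at t2
    linarith [hhalf n hn]
  · intro h
    have := h (Metric.ball (e 1) (1/2)) Metric.isOpen_ball (Metric.mem_ball_self (by norm_num))
    rw [hP1, Metric.mem_nhdsWithin_iff] at this
    obtain ⟨r, hr, hsub⟩ := this
    obtain ⟨n, hn, hnr⟩ := hsmall r hr
    have hn1 := hnorm n (by omega)
    obtain ⟨z, ⟨hzW, hzC⟩, hz⟩ := hsub ⟨by rw [mem_ball_zero_iff, hn1]; exact hnr, hP1' n hn⟩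
    rw [fib1 n hn z hzC hz, Metric.mem_ball, dist_comm, dist_eq_norm] at hzW
    have t := norm_sub_norm_le (e 1) ((n : ℝ)⁻¹ • e n)
    rw [he 1 le_rfl, hn1] at t
    linarith [hhalf n hn]
end

section
/- Let Z be a real Banach space and let (eₙ)ₙ≥₁ be a sequence in Z with ‖eₙ‖ = 1 for all n, admitting biorthogonal continuous linear functionals φₖ : Z → ℝ with φₖ(eⱼ) = 1 if k = j and 0 otherwise. Let C be the closed convex hull of the set {eₙ/n : n ≥ 1} ∪ {2e₁ − eₙ/n : n ≥ 1}. Then for every λ > 0 and every n ≥ 2, the point z = λe₁ + eₙ/n satisfies dist(z, C) > 0; in particular z ∉ C. -/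
/-- Lemma 2.5: with `(eₙ)` a normalized sequence admitting biorthogonal continuous linear
functionals and `C` the closed convex hull of `{eₙ/n} ∪ {2e₁ - eₙ/n}`, every point
`z = λe₁ + eₙ/n` with `λ > 0` and `n ≥ 2` is at positive distance from `C`;
in particular `z ∉ C`. -/
theorem dist_pos_of_shifted_point
    {Z : Type*} [NormedAddCommGroup Z] [NormedSpace ℝ Z] [CompleteSpace Z]
    (e : ℕ → Z) (he : ∀ n, 1 ≤ n → ‖e n‖ = 1)
    (φ : ℕ → Z →L[ℝ] ℝ)
    (hbi : ∀ k j, 1 ≤ k → 1 ≤ j → φ k (e j) = if k = j then 1 else 0)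
    (C : Set Z)
    (hC : C = closure (convexHull ℝ
      ({z : Z | ∃ n : ℕ, 1 ≤ n ∧ z = (n : ℝ)⁻¹ • e n} ∪
        {z : Z | ∃ n : ℕ, 1 ≤ n ∧ z = (2 : ℝ) • e 1 - (n : ℝ)⁻¹ • e n}))) :
    ∀ lam : ℝ, 0 < lam → ∀ n : ℕ, 2 ≤ n →
      0 < Metric.infDist (lam • e 1 + (n : ℝ)⁻¹ • e n) C ∧
      lam • e 1 + (n : ℝ)⁻¹ • e n ∉ C := by
  intro lam hlam n hn
  have hn0 : (n : ℝ) ≠ 0 := by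
    have : n ≠ 0 := by omega
    exact_mod_cast this
  -- the separating functional `f = n φₙ + φ₁ / 2` is at most `1` on `C`
  let f : Z →L[ℝ] ℝ := (n : ℝ) • φ n + (1 / 2 : ℝ) • φ 1
  have hf : ∀ x, f x = n * φ n x + 1 / 2 * φ 1 x := fun x => by simp [f]
  have hn1 : n ≠ 1 := by omega
  have h1n : 1 ≠ n := by omega
  have hn1' : 1 ≤ n := by omega
  have hsub : C ⊆ {x | f x ≤ 1} := by
    rw [hC]
    refine closure_minimal (convexHull_min ?_ ?_) (isClosed_le f.continuous continuous_const)
    · rintro x (⟨k, hk, rfl⟩ | ⟨k, hk, rfl⟩)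
      all_goals
        simp only [Set.mem_setOf_eq, hf, map_sub, map_smul, smul_eq_mul, hbi n k hn1' hk,
          hbi 1 k le_rfl hk, hbi n 1 hn1' le_rfl, hbi 1 1 le_rfl le_rfl, if_neg hn1, if_true]
        by_cases h1 : n = k
        · subst h1
          simp [h1n, hn0]
        · by_cases h2 : 1 = k
          · subst h2
            norm_num [hn1]
          · simp [h1, h2]
    · exact convex_halfSpace_le f.toLinearMap.isLinear 1
  have hz : lam • e 1 + (n : ℝ)⁻¹ • e n ∉ C := by
    intro h
    have h' : f (lam • e 1 + (n : ℝ)⁻¹ • e n) ≤ 1 := hsub h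
    simp only [hf, map_add, map_smul, smul_eq_mul, hbi n n hn1' hn1',
      hbi 1 n le_rfl hn1', hbi n 1 hn1' le_rfl, hbi 1 1 le_rfl le_rfl, if_neg hn1, if_neg h1n,
      if_true, mul_zero, mul_one, zero_add, add_zero, mul_inv_cancel₀ hn0] at h'
    linarith
  have hcl : IsClosed C := by rw [hC]; exact isClosed_closure
  have hne : C.Nonempty := by
    rw [hC]
    exact ⟨_, subset_closure (subset_convexHull ℝ _ (Or.inl ⟨1, le_rfl, rfl⟩))⟩
  exact ⟨(hcl.notMem_iff_infDist_pos hne).1 hz, hz⟩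
end

section
/- Let Z be a real Banach space and let (eₙ)ₙ≥₁ be a sequence in Z with ‖eₙ‖ = 1 for all n, admitting biorthogonal continuous linear functionals φₖ : Z → ℝ with φₖ(eⱼ) = 1 if k = j and 0 otherwise. Let P : Z → Z be a continuous linear projection with P(e₁) = 0 and P(eₙ) = eₙ for all n ≥ 2, and let C be the closed convex hull of {eₙ/n : n ≥ 1} ∪ {2e₁ − eₙ/n : n ≥ 1}. Then for every n ≥ 2: if z ∈ C and P(z) = eₙ/n then z = eₙ/n, and if z ∈ C and P(z) = −eₙ/n then z = 2e₁ − eₙ/n. -/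
theorem aux_eq_of_exposed {Z : Type*} [NormedAddCommGroup Z] [NormedSpace ℝ Z]
    (S : Set Z) (p : Z) (f : Z →L[ℝ] ℝ) (h : ∀ s ∈ S, ‖s - p‖ ≤ 6 * (1 - f s))
    (z : Z) (hz : z ∈ closure (convexHull ℝ S)) (hf : f z = 1) : z = p := by
  have hcl : IsClosed {w : Z | ‖w - p‖ ≤ 6 * (1 - f w)} :=
    isClosed_le (by fun_prop) (by fun_prop)
  have hcv : Convex ℝ {w : Z | ‖w - p‖ ≤ 6 * (1 - f w)} := by
    intro x hx y hy a b ha hb hab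
    simp only [Set.mem_ofPred_eq] at hx hy ⊢
    have h1 : a • x + b • y - p = a • (x - p) + b • (y - p) := by
      have : p = (a + b) • p := by rw [hab, one_smul]
      conv_lhs => rw [this]
      module
    rw [h1]
    calc ‖a • (x - p) + b • (y - p)‖ ≤ ‖a • (x - p)‖ + ‖b • (y - p)‖ := norm_add_le _ _
      _ = a * ‖x - p‖ + b * ‖y - p‖ := by
        rw [norm_smul, norm_smul, Real.norm_of_nonneg ha, Real.norm_of_nonneg hb]
      _ ≤ a * (6 * (1 - f x)) + b * (6 * (1 - f y)) := by gcongr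
      _ = 6 * (1 - f (a • x + b • y)) := by
        simp only [map_add, map_smul, smul_eq_mul]
        linear_combination 6 * hab
  have : ‖z - p‖ ≤ 6 * (1 - f z) := closure_minimal (convexHull_min h hcv) hcl hz
  rw [hf, sub_self, mul_zero] at this
  exact sub_eq_zero.mp (norm_le_zero_iff.mp this)

/-- Single-valuedness claim in the proof of Theorem 2.4: over the points `±eₙ/n` (`n ≥ 2`),
the multivalued inverse `(P|_C)⁻¹` is single-valued: the only point of `C` that `P` sends to
`eₙ/n` is `eₙ/n` itself, and the only point of `C` sent to `-eₙ/n` is `2e₁ - eₙ/n`. -/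
theorem fiber_single_valued_over_special_points
    {Z : Type*} [NormedAddCommGroup Z] [NormedSpace ℝ Z] [CompleteSpace Z]
    (e : ℕ → Z) (he : ∀ n, 1 ≤ n → ‖e n‖ = 1)
    (φ : ℕ → Z →L[ℝ] ℝ)
    (hbi : ∀ k j, 1 ≤ k → 1 ≤ j → φ k (e j) = if k = j then 1 else 0)
    (P : Z →L[ℝ] Z) (hPP : ∀ z, P (P z) = P z)
    (hP1 : P (e 1) = 0) (hPn : ∀ n, 2 ≤ n → P (e n) = e n)
    (C : Set Z)
    (hC : C = closure (convexHull ℝ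
      ({z : Z | ∃ n : ℕ, 1 ≤ n ∧ z = (n : ℝ)⁻¹ • e n} ∪
        {z : Z | ∃ n : ℕ, 1 ≤ n ∧ z = (2 : ℝ) • e 1 - (n : ℝ)⁻¹ • e n}))) :
    ∀ n : ℕ, 2 ≤ n →
      (∀ z ∈ C, P z = (n : ℝ)⁻¹ • e n → z = (n : ℝ)⁻¹ • e n) ∧
      (∀ z ∈ C, P z = -((n : ℝ)⁻¹ • e n) → z = (2 : ℝ) • e 1 - (n : ℝ)⁻¹ • e n) := by
  subst hC
  intro n hn
  have hn0 : (n : ℝ) ≠ 0 := by positivity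
  have hb : ∀ m : ℕ, 1 ≤ m → ‖(m : ℝ)⁻¹ • e m‖ ≤ 1 := by
    intro m hm
    rw [norm_smul, he m hm, mul_one, norm_inv, Real.norm_natCast]
    exact inv_le_one_of_one_le₀ (by exact_mod_cast hm)
  have hc : ∀ m : ℕ, 1 ≤ m → ‖(2 : ℝ) • e 1 - (m : ℝ)⁻¹ • e m‖ ≤ 3 := by
    intro m hm
    refine (norm_sub_le _ _).trans ?_
    have := hb m hm
    have h2 : ‖(2 : ℝ) • e 1‖ = 2 := by rw [norm_smul, he 1 le_rfl]; norm_num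
    linarith
  have hψ : ∀ m : ℕ, 1 ≤ m → φ n (P (e m)) = if n = m then 1 else 0 := by
    intro m hm
    rcases Nat.lt_or_ge m 2 with h | h
    · obtain rfl : m = 1 := by omega
      rw [hP1, map_zero, if_neg (by omega)]
    · rw [hPn m h, hbi n m (by omega) hm]
  have hnn := hψ n (by omega)
  rw [if_pos rfl] at hnn
  have hen := hPn n hn
  rw [hen] at hnn
  have hn1 : 1 ≤ n := by omega
  refine ⟨fun z hz hPz => ?_, fun z hz hPz => ?_⟩
  · refine aux_eq_of_exposed _ _ ((n : ℝ) • (φ n).comp P) ?_ z hz ?_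
    · rintro s (⟨m, hm, rfl⟩ | ⟨m, hm, rfl⟩)
      · by_cases hmn : n = m
        · subst hmn
          simp [hen, hnn, hn0]
        · have := norm_sub_le ((m : ℝ)⁻¹ • e m) ((n : ℝ)⁻¹ • e n)
          have h1 := hb m hm
          have h2 := hb n hn1
          simp [hψ m hm, hmn]
          linarith
      · have := norm_sub_le ((2 : ℝ) • e 1 - (m : ℝ)⁻¹ • e m) ((n : ℝ)⁻¹ • e n)
        have h1 := hc m hm
        have h2 := hb n hn1
        by_cases hmn : n = m
        · subst hmn
          simp [hP1, hen, hnn, hn0]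
          linarith
        · simp [hP1, hψ m hm, hmn]
          linarith
    · simp [hPz, hnn, hn0]
  · refine aux_eq_of_exposed _ _ (-((n : ℝ) • (φ n).comp P)) ?_ z hz ?_
    · rintro s (⟨m, hm, rfl⟩ | ⟨m, hm, rfl⟩)
      · have := norm_sub_le ((m : ℝ)⁻¹ • e m) ((2 : ℝ) • e 1 - (n : ℝ)⁻¹ • e n)
        have h1 := hb m hm
        have h2 := hc n hn1
        by_cases hmn : n = m
        · subst hmn
          simp [hen, hnn, hn0]
          linarith
        · simp [hψ m hm, hmn]
          linarith
      · by_cases hmn : n = m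
        · subst hmn
          simp [hP1, hen, hnn, hn0]
        · have := norm_sub_le ((2 : ℝ) • e 1 - (m : ℝ)⁻¹ • e m)
            ((2 : ℝ) • e 1 - (n : ℝ)⁻¹ • e n)
          have h1 := hc m hm
          have h2 := hc n hn1
          have h3 : (-((n : ℝ) • (φ n).comp P)) ((2 : ℝ) • e 1 - (m : ℝ)⁻¹ • e m) = 0 := by
            simp [hP1, hψ m hm, hmn]
          rw [h3]
          linarith
    · simp [hPz, hnn, hn0]
end

section
/- Let Z be a real Banach space with dim Z ≥ 3. Then there exist a continuous linear surjection L : Z → ℝ² and a compact convex subset C ⊆ Z such that no continuous map s : L(C) → C satisfies L(s(y)) = y for every y ∈ L(C). -/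
/-- The convex body in `ℝ³` used for the counterexample. -/
def bodyC : Set (Fin 3 → ℝ) :=
  {p | (p ∈ Set.Icc (fun _ => -1 : Fin 3 → ℝ) (fun _ => 1)) ∧
    ∀ t : ℝ, 0 ≤ t → 0 ≤ p 1 * t ^ 2 - 2 * t * p 0 + (1 + p 2) / 2 ∧
      0 ≤ p 1 * t ^ 2 + 2 * t * p 0 + (1 - p 2) / 2}

lemma bodyC_compact : IsCompact bodyC := by
  have hcl : IsClosed {p : Fin 3 → ℝ |
      ∀ t : ℝ, 0 ≤ t → 0 ≤ p 1 * t ^ 2 - 2 * t * p 0 + (1 + p 2) / 2 ∧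
      0 ≤ p 1 * t ^ 2 + 2 * t * p 0 + (1 - p 2) / 2} := by
    simp only [Set.ofPred_forall, Set.ofPred_and]
    refine isClosed_iInter fun t => isClosed_iInter fun _ => IsClosed.inter ?_ ?_
    · exact isClosed_le continuous_const (by fun_prop)
    · exact isClosed_le continuous_const (by fun_prop)
  exact isCompact_Icc.inter_right hcl

lemma bodyC_convex : Convex ℝ bodyC := by
  rintro p ⟨hp, hp'⟩ q ⟨hq, hq'⟩ a b ha hb hab
  refine ⟨convex_Icc _ _ hp hq ha hb hab, fun t ht => ?_⟩
  obtain ⟨h1, h2⟩ := hp' t ht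
  obtain ⟨h3, h4⟩ := hq' t ht
  have hb' : b = 1 - a := by linarith
  simp only [Pi.add_apply, Pi.smul_apply, smul_eq_mul]
  have e1 := add_nonneg (mul_nonneg ha h1) (mul_nonneg hb h3)
  have e2 := add_nonneg (mul_nonneg ha h2) (mul_nonneg hb h4)
  subst hb'
  constructor
  · linarith
  · linarith

lemma bodyC_pos {u : ℝ} (h0 : 0 ≤ u) (h1 : u ≤ 1) : ![u, u ^ 2, 1] ∈ bodyC := by
  refine ⟨⟨fun i => ?_, fun i => ?_⟩, fun t ht => ?_⟩
  · fin_cases i <;> simp [abs_of_nonneg h0] <;> nlinarith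
  · fin_cases i <;> simp [abs_of_nonneg h0] <;> nlinarith
  · have := mul_nonneg h0 ht
    simp
    constructor <;> nlinarith [sq_nonneg (u * t - 1), sq_nonneg (u * t)]

lemma bodyC_neg {u : ℝ} (h0 : 0 ≤ u) (h1 : u ≤ 1) : ![-u, u ^ 2, -1] ∈ bodyC := by
  refine ⟨⟨fun i => ?_, fun i => ?_⟩, fun t ht => ?_⟩
  · fin_cases i <;> simp [abs_of_nonneg h0] <;> nlinarith
  · fin_cases i <;> simp [abs_of_nonneg h0] <;> nlinarith
  · have := mul_nonneg h0 ht
    simp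
    constructor <;> nlinarith [sq_nonneg (u * t - 1), sq_nonneg (u * t)]

lemma bodyC_fib_pos {p : Fin 3 → ℝ} (hp : p ∈ bodyC) {u : ℝ} (h0 : 0 < u)
    (hx : p 0 = u) (hy : p 1 = u ^ 2) : p 2 = 1 := by
  have h := (hp.2 u⁻¹ (by positivity)).1
  have h2 := hp.1.2 2
  rw [hx, hy] at h
  field_simp at h
  simp at h2
  linarith

lemma bodyC_fib_neg {p : Fin 3 → ℝ} (hp : p ∈ bodyC) {u : ℝ} (h0 : 0 < u)
    (hx : p 0 = -u) (hy : p 1 = u ^ 2) : p 2 = -1 := by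
  have h := (hp.2 u⁻¹ (by positivity)).2
  have h2 := hp.1.1 2
  rw [hx, hy] at h
  field_simp at h
  simp at h2
  linarith

/-- One direction of Remark (1) after Theorem 2.1: in every Banach space `Z` of dimension at
least 3 there exist a continuous linear surjection `L : Z → ℝ²` and a compact convex subset
`C ⊆ Z` such that the restriction `L|_C : C → L(C)` has no continuous right inverse. -/
theorem exists_no_continuous_right_inverse_of_three_le_rank
    {Z : Type*} [NormedAddCommGroup Z] [NormedSpace ℝ Z] [CompleteSpace Z]
    (hZ : 3 ≤ Module.rank ℝ Z) :
    ∃ (L : Z →L[ℝ] ℝ × ℝ) (C : Set Z), Function.Surjective L ∧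
      IsCompact C ∧ Convex ℝ C ∧
      ¬ ∃ s : ↥(⇑L '' C) → ↥C, Continuous s ∧ ∀ y : ↥(⇑L '' C), L (s y : Z) = (y : ℝ × ℝ) := by
  obtain ⟨i, φ, hφ⟩ : ∃ (i : (Fin 3 → ℝ) →L[ℝ] Z) (φ : Z →L[ℝ] (Fin 3 → ℝ)),
      ∀ p, φ (i p) = p := by
    obtain ⟨v, hv⟩ := (Module.le_rank_iff (R := ℝ) (M := Z) (n := 3)).1 (by exact_mod_cast hZ)
    let b := Module.Basis.span hv
    have : FiniteDimensional ℝ (Submodule.span ℝ (Set.range v)) := b.finiteDimensional_of_finite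
    obtain ⟨f, hf⟩ := Submodule.ClosedComplemented.of_finiteDimensional
      (Submodule.span ℝ (Set.range v))
    refine ⟨(Submodule.subtypeL (Submodule.span ℝ (Set.range v))).comp b.equivFunL.symm.toContinuousLinearMap,
      b.equivFunL.toContinuousLinearMap.comp f, fun p => ?_⟩
    simp [hf]
  let L : Z →L[ℝ] ℝ × ℝ :=
    ((ContinuousLinearMap.proj (R := ℝ) (φ := fun _ : Fin 3 => ℝ) 0).comp φ).prod
      ((ContinuousLinearMap.proj (R := ℝ) (φ := fun _ : Fin 3 => ℝ) 1).comp φ)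
  have hL : ∀ z, L z = (φ z 0, φ z 1) := fun z => rfl
  refine ⟨L, i '' bodyC, ?_, bodyC_compact.image i.continuous,
    bodyC_convex.linear_image i.toLinearMap, ?_⟩
  · rintro ⟨x, y⟩
    exact ⟨i ![x, y, 0], by simp [hL, hφ]⟩
  rintro ⟨s, hs, hsL⟩
  have hmem : ∀ y, φ (s y : Z) ∈ bodyC := fun y => by
    obtain ⟨p, hp, hpe⟩ := (s y).2
    rw [← hpe, hφ]; exact hp
  have hσ : Continuous fun y => φ (s y : Z) 2 := by fun_prop
  have mpos : ∀ u : ℝ, 0 ≤ u → u ≤ 1 → (u, u ^ 2) ∈ L '' (i '' bodyC) := fun u h0 h1 =>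
    ⟨_, ⟨_, bodyC_pos h0 h1, rfl⟩, by simp [hL, hφ]⟩
  have mneg : ∀ u : ℝ, 0 ≤ u → u ≤ 1 → (-u, u ^ 2) ∈ L '' (i '' bodyC) := fun u h0 h1 =>
    ⟨_, ⟨_, bodyC_neg h0 h1, rfl⟩, by simp [hL, hφ]⟩
  let a : ℕ → ℝ := fun n => 1 / ((n : ℝ) + 1)
  have ha0 : ∀ n, 0 < a n := fun n => by positivity
  have ha1 : ∀ n, a n ≤ 1 := fun n => by
    rw [div_le_one (by positivity)]; linarith [(Nat.cast_nonneg n : (0 : ℝ) ≤ n)]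
  have ha : Filter.Tendsto a Filter.atTop (nhds 0) := tendsto_one_div_add_atTop_nhds_zero_nat
  let o : ↥(L '' (i '' bodyC)) := ⟨(0, 0), by simpa using mpos 0 le_rfl zero_le_one⟩
  have tp : Filter.Tendsto (fun n => (⟨_, mpos (a n) (ha0 n).le (ha1 n)⟩ : ↥(L '' (i '' bodyC))))
      Filter.atTop (nhds o) := by
    rw [tendsto_subtype_rng]
    exact ha.prodMk_nhds (by simpa using ha.pow 2)
  have tn : Filter.Tendsto (fun n => (⟨_, mneg (a n) (ha0 n).le (ha1 n)⟩ : ↥(L '' (i '' bodyC))))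
      Filter.atTop (nhds o) := by
    rw [tendsto_subtype_rng]
    exact Filter.Tendsto.prodMk_nhds (by simpa using ha.neg) (by simpa using ha.pow 2)
  have e1 := (hσ.tendsto o).comp tp
  have e2 := (hσ.tendsto o).comp tn
  have c1 : φ (s o : Z) 2 = 1 := by
    refine tendsto_nhds_unique e1 (tendsto_const_nhds.congr fun n => ?_)
    have h := hsL ⟨_, mpos (a n) (ha0 n).le (ha1 n)⟩
    rw [hL, Prod.mk.injEq] at h
    exact (bodyC_fib_pos (hmem _) (ha0 n) h.1 h.2).symm
  have c2 : φ (s o : Z) 2 = -1 := by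
    refine tendsto_nhds_unique e2 (tendsto_const_nhds.congr fun n => ?_)
    have h := hsL ⟨_, mneg (a n) (ha0 n).le (ha1 n)⟩
    rw [hL, Prod.mk.injEq] at h
    exact (bodyC_fib_neg (hmem _) (ha0 n) h.1 h.2).symm
  linarith
end

section
/- Let Z be a real Banach space with dim Z ≤ 2. Then for every real Banach space Y, every continuous linear surjection L : Z → Y, and every compact convex subset C ⊆ Z, there exists a continuous map s : L(C) → C such that L(s(y)) = y for every y ∈ L(C). -/
/-- A compact set on which `L` is injective with the same image yields a continuous section. -/
theorem section_of_compact_transversal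
    {Z : Type*} [NormedAddCommGroup Z] [NormedSpace ℝ Z]
    {Y : Type*} [NormedAddCommGroup Y] [NormedSpace ℝ Y]
    (L : Z →L[ℝ] Y) (C K : Set Z) (hK : IsCompact K) (hKC : K ⊆ C)
    (hinj : Set.InjOn L K) (himg : ∀ x ∈ C, ∃ z ∈ K, L z = L x) :
    ∃ s : ↥(⇑L '' C) → ↥C, Continuous s ∧ ∀ y : ↥(⇑L '' C), L (s y : Z) = (y : Y) := by
  haveI : CompactSpace K := isCompact_iff_compactSpace.mp hK
  let g : K → ↥(⇑L '' C) := fun z => ⟨L z, z, hKC z.2, rfl⟩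
  have hg : Continuous g := by
    apply Continuous.subtype_mk
    fun_prop
  have hb : Function.Bijective g := by
    constructor
    · intro a b hab
      exact Subtype.ext (hinj a.2 b.2 (congrArg Subtype.val hab))
    · rintro ⟨_, x, hx, rfl⟩
      obtain ⟨z, hz, hzx⟩ := himg x hx
      exact ⟨⟨z, hz⟩, Subtype.ext hzx⟩
  let e : K ≃ ↥(⇑L '' C) := Equiv.ofBijective g hb
  have he : Continuous e.symm := Continuous.continuous_symm_of_equiv_compact_to_t2 (f := e) hg
  refine ⟨fun y => ⟨e.symm y, hKC (e.symm y).2⟩, ?_, fun y => ?_⟩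
  · apply Continuous.subtype_mk
    exact continuous_subtype_val.comp he
  · exact congrArg Subtype.val (e.apply_symm_apply y)

/-- The set of fibrewise maximizers of `φ` is closed when the base is one-dimensional. -/
theorem isClosed_fibre_maximizers
    {Z : Type*} [NormedAddCommGroup Z] [NormedSpace ℝ Z]
    (f φ : Z →L[ℝ] ℝ) (C : Set Z) (hCcp : IsCompact C) (hC : Convex ℝ C) :
    IsClosed {x | x ∈ C ∧ ∀ x' ∈ C, f x' = f x → φ x' ≤ φ x} := by
  rw [← closure_subset_iff_isClosed]
  intro x hx
  rw [mem_closure_iff_frequently] at hx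
  have hxC : x ∈ C := hCcp.isClosed.mem_of_frequently_of_tendsto
    (hx.mono fun z hz => hz.1) Filter.tendsto_id
  refine ⟨hxC, fun x' hx' hfx => ?_⟩
  by_contra! hlt
  obtain ⟨p, hp, hpmin⟩ := hCcp.exists_isMinOn ⟨x, hxC⟩ f.continuous.continuousOn
  obtain ⟨q, hq, hqmax⟩ := hCcp.exists_isMaxOn ⟨x, hxC⟩ f.continuous.continuousOn
  have key : ∀ r : Z, ∀ᶠ z in nhds x,
      φ z < φ x' + ((f z - f x) / (f r - f x)) * (φ r - φ x') := by
    intro r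
    apply ContinuousAt.eventually_lt
    · fun_prop
    · fun_prop
    · simpa using hlt
  have move : ∀ r ∈ C, ∀ z, (∀ w ∈ C, f w = f z → φ w ≤ φ z) → f r ≠ f x →
      0 ≤ (f z - f x) / (f r - f x) → (f z - f x) / (f r - f x) ≤ 1 →
      φ x' + ((f z - f x) / (f r - f x)) * (φ r - φ x') ≤ φ z := by
    intro r hr z hz hne h0 h1
    have hmem := hC.add_smul_sub_mem hx' hr ⟨h0, h1⟩
    have := hz _ hmem (by
      simp only [map_add, map_smul, map_sub, smul_eq_mul, hfx]
      have : f r - f x ≠ 0 := sub_ne_zero.mpr hne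
      field_simp
      ring)
    simpa using this
  have h0 : ∀ᶠ z in nhds x, φ z < φ x' := by
    apply ContinuousAt.eventually_lt (by fun_prop) (by fun_prop) hlt
  obtain ⟨z, ⟨hzC, hz⟩, hz0, hzp, hzq⟩ :=
    (hx.and_eventually (h0.and ((key p).and (key q)))).exists
  have hpz : f p ≤ f z := hpmin hzC
  have hzq' : f z ≤ f q := hqmax hzC
  rcases lt_trichotomy (f z) (f x) with h | h | h
  · refine absurd hzp (not_lt.mpr (move p hp z hz (by linarith) ?_ ?_))
    · exact div_nonneg_of_nonpos (by linarith) (by linarith)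
    · rw [div_le_one_of_neg (by linarith)]; linarith
  · exact absurd hz0 (not_lt.mpr (hz x' hx' (hfx.trans h.symm)))
  · refine absurd hzq (not_lt.mpr (move q hq z hz (by linarith) ?_ ?_))
    · exact div_nonneg (by linarith) (by linarith)
    · rw [div_le_one (by linarith)]; linarith

/-- The other direction of Remark (1) after Theorem 2.1: every continuous linear surjection
from a Banach space `Z` of dimension at most 2 is hereditarily invertible with respect to the
family of all convex compacta of `Z`. -/
theorem compact_convex_hereditary_invertible_of_rank_le_two
    {Z : Type*} [NormedAddCommGroup Z] [NormedSpace ℝ Z] [CompleteSpace Z]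
    (hZ : Module.rank ℝ Z ≤ 2)
    {Y : Type*} [NormedAddCommGroup Y] [NormedSpace ℝ Y] [CompleteSpace Y]
    (L : Z →L[ℝ] Y) (hL : Function.Surjective L)
    (C : Set Z) (hCcp : IsCompact C) (hC : Convex ℝ C) :
    ∃ s : ↥(⇑L '' C) → ↥C, Continuous s ∧ ∀ y : ↥(⇑L '' C), L (s y : Z) = (y : Y) := by
  have hfin : Module.Finite ℝ Z := by
    rw [← Module.rank_lt_aleph0_iff]
    exact hZ.trans_lt (by exact_mod_cast Cardinal.natCast_lt_aleph0 (n := 2))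
  have hdim : Module.finrank ℝ Z ≤ 2 := Module.finrank_le_of_rank_le (by exact_mod_cast hZ)
  have hfinY : Module.Finite ℝ Y := Module.Finite.of_surjective L.toLinearMap hL
  have hrn := LinearMap.finrank_range_add_finrank_ker L.toLinearMap
  rw [LinearMap.range_eq_top.mpr hL, finrank_top] at hrn
  rcases C.eq_empty_or_nonempty with rfl | ⟨c, hc⟩
  · exact section_of_compact_transversal L ∅ ∅ hCcp subset_rfl (by simp) (by simp)
  obtain h0 | h1 | h2 : Module.finrank ℝ Y = 0 ∨ Module.finrank ℝ Y = 1 ∨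
      Module.finrank ℝ (LinearMap.ker L.toLinearMap) = 0 := by omega
  · haveI : Subsingleton Y := Module.finrank_zero_iff.mp h0
    exact section_of_compact_transversal L C {c} isCompact_singleton (by simpa using hc)
      (by simp) (fun x _ => ⟨c, rfl, Subsingleton.elim _ _⟩)
  · let ℓ : Y ≃L[ℝ] ℝ := ContinuousLinearEquiv.ofFinrankEq (by simpa using h1)
    obtain ⟨v, hv⟩ := finrank_le_one_iff.mp
      (show Module.finrank ℝ (LinearMap.ker L.toLinearMap) ≤ 1 by omega)
    obtain ⟨φ, -, hφ⟩ := exists_dual_vector'' ℝ (v : Z)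
    let f : Z →L[ℝ] ℝ := (ℓ : Y →L[ℝ] ℝ).comp L
    have hf : ∀ a b, f a = f b ↔ L a = L b := fun a b => ℓ.injective.eq_iff
    have hcl := isClosed_fibre_maximizers f φ C hCcp hC
    refine section_of_compact_transversal L C _
      (hCcp.of_isClosed_subset hcl (fun x hx => hx.1)) (fun x hx => hx.1) ?_ ?_
    · rintro a ⟨haC, ha⟩ b ⟨hbC, hb⟩ hab
      have e : φ a = φ b := le_antisymm (hb a haC ((hf _ _).2 hab))
        (ha b hbC ((hf _ _).2 hab.symm))
      obtain ⟨t, ht⟩ := hv ⟨a - b, by simp [hab]⟩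
      have ht' : t • (v : Z) = a - b := congrArg Subtype.val ht
      have h3 : t * ‖(v : Z)‖ = 0 := by
        have := congrArg φ ht'
        rw [map_smul, hφ, map_sub, e, sub_self] at this
        simpa using this
      have h4 : t • (v : Z) = 0 := by
        rcases mul_eq_zero.mp h3 with h | h
        · simp [h]
        · simp [norm_eq_zero.mp h]
      rw [h4] at ht'
      exact sub_eq_zero.mp ht'.symm
    · intro x hx
      have hcp : IsCompact (C ∩ {w | f w = f x}) :=
        hCcp.inter_right (isClosed_eq f.continuous continuous_const)
      obtain ⟨z, ⟨hzC, hzx⟩, hz⟩ := hcp.exists_isMaxOn ⟨x, hx, rfl⟩ φ.continuous.continuousOn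
      exact ⟨z, ⟨hzC, fun w hw hwz => hz ⟨hw, hwz.trans hzx⟩⟩, (hf _ _).1 hzx⟩
  · have hinj : Function.Injective L :=
      LinearMap.ker_eq_bot.mp (Submodule.finrank_eq_zero.mp h2)
    exact section_of_compact_transversal L C C hCcp subset_rfl hinj.injOn
      (fun x hx => ⟨x, hx, rfl⟩)
end
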